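/- Let R be a quantum solvable algebra over C = K[q,q⁻¹] (or a localization thereof): R is generated by x₁,…,x_M (with some generators invertible) such that the ordered monomials form a free C-basis, and x_i x_j = q^{s_{ij}} x_j x_i + r_{ij} for i < j, where r_{ij} is a C-combination of monomials in x_{i+1},…,x_{j−1} only, and (s_{ij}) is skew-symmetric. Then every FA-element of R is an FA_q-element: for every a ∈ R the polynomial f_a(t) in the FA-relation can be chosen to split into linear factors with all roots in Γ = {qᵏ : k ∈ ℤ}. -/

import Mathlib

/-- The ordered monomial `x₁^{t₁} ⋯ x_M^{t_M}` (negative exponents realized via the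
given inverses of the distinguished generators). -/
def orderedMonomial {R : Type*} [Ring R] {M : ℕ} (x xinv : Fin M → R)
    (t : Fin M → ℤ) : R :=
  ((List.finRange M).map fun j =>
    if 0 ≤ t j then x j ^ (t j).toNat else xinv j ^ (- t j).toNat).prod

/-- `x` is an FA-element of the domain `R` over the field `F`. -/
def IsFA (F : Type*) {R : Type*} [Field F] [Ring R] [Algebra F R] (x : R) : Prop :=
  x ≠ 0 ∧ ∀ a : R, ∃ (N : ℕ) (c : ℕ → F), c 0 ≠ 0 ∧ c N ≠ 0 ∧
    ∑ i ∈ Finset.range (N + 1), c i • (x ^ (N - i) * a * x ^ i) = 0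

section QSolv

variable {F : Type*} [Field F] {R : Type*} [Ring R] [Algebra F R] {M : ℕ}

/-- Bundled hypotheses. -/
structure QS (q : F) (kset : Finset (Fin M)) (x xinv : Fin M → R)
    (s : Fin M → Fin M → ℤ) (r : Fin M → Fin M → R) : Prop where
  hq : q ≠ 0
  hinv : ∀ j ∈ kset, x j * xinv j = 1 ∧ xinv j * x j = 1
  hrel : ∀ i j : Fin M, i < j → x i * x j = (q ^ (s i j)) • (x j * x i) + r i j
  hr : ∀ i j : Fin M, i < j → r i j ∈ Submodule.span F
      {w : R | ∃ t : Fin M → ℤ, (∀ p, t p ≠ 0 → i < p ∧ p < j) ∧ (∀ p, 0 ≤ t p) ∧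
        w = orderedMonomial x xinv t}
  hrdist : ∀ i j : Fin M, i < j → (i ∈ kset ∨ j ∈ kset) → r i j = 0

/-- One power. -/
def XX (x xinv : Fin M → R) (j : Fin M) (z : ℤ) : R :=
  if 0 ≤ z then x j ^ z.toNat else xinv j ^ (-z).toNat

/-- Tail of the ordered monomial. -/
def PP (x xinv : Fin M → R) (i : ℕ) (t : Fin M → ℤ) : R :=
  (((List.finRange M).drop i).map fun j => XX x xinv j (t j)).prod

/-- Admissible exponents. -/
def Adm (kset : Finset (Fin M)) (t : Fin M → ℤ) : Prop := ∀ j ∉ kset, 0 ≤ t j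

/-- Lexicographic order on the tail. -/
def lti (i : ℕ) (u t : Fin M → ℤ) : Prop :=
  ∃ j : Fin M, i ≤ (j : ℕ) ∧ (∀ k : Fin M, i ≤ (k : ℕ) → k < j → u k = t k) ∧ u j < t j

variable (F) in
/-- Tail algebra. -/
def AA (kset : Finset (Fin M)) (x xinv : Fin M → R) (i : ℕ) : Submodule F R :=
  Submodule.span F {w | ∃ t, Adm kset t ∧ w = PP x xinv i t}

variable (F) in
/-- Lower terms. -/
def VV (kset : Finset (Fin M)) (x xinv : Fin M → R) (i : ℕ) (t : Fin M → ℤ) : Submodule F R :=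
  Submodule.span F {w | ∃ u, Adm kset u ∧ lti i u t ∧ w = PP x xinv i u}

variable (F) in
/-- Terms of lower degree in the `i`-th variable. -/
def LL (kset : Finset (Fin M)) (x xinv : Fin M → R) (i : Fin M) (z : ℤ) : Submodule F R :=
  Submodule.span F {y | ∃ w v, w < z ∧ (i ∉ kset → 0 ≤ w) ∧ Adm kset v ∧
    y = XX x xinv i w * PP x xinv (i + 1) v}

theorem XX_zero (x xinv : Fin M → R) (j : Fin M) : XX x xinv j 0 = 1 := by simp [XX]

theorem XX_nat (x xinv : Fin M → R) (j : Fin M) (n : ℕ) : XX x xinv j n = x j ^ n := by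
  simp [XX]

theorem XX_one (x xinv : Fin M → R) (j : Fin M) : XX x xinv j 1 = x j := by simp [XX]

theorem XX_neg_one (x xinv : Fin M → R) (j : Fin M) : XX x xinv j (-1) = xinv j := by simp [XX]

theorem XX_unit {q : F} {kset : Finset (Fin M)} {x xinv : Fin M → R}
    {s : Fin M → Fin M → ℤ} {r : Fin M → Fin M → R} (h : QS q kset x xinv s r)
    (j : Fin M) (hj : j ∈ kset) : ∃ u : Rˣ, (u : R) = x j ∧ ((u⁻¹ : Rˣ) : R) = xinv j ∧
      ∀ z : ℤ, XX x xinv j z = ((u ^ z : Rˣ) : R) := by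
  refine ⟨⟨x j, xinv j, (h.hinv j hj).1, (h.hinv j hj).2⟩, rfl, rfl, fun z => ?_⟩
  set u : Rˣ := ⟨x j, xinv j, (h.hinv j hj).1, (h.hinv j hj).2⟩ with hu
  have h1 : (u : R) = x j := rfl
  have h2 : ((u⁻¹ : Rˣ) : R) = xinv j := rfl
  unfold XX
  split_ifs with hz
  · obtain ⟨n, rfl⟩ := Int.eq_ofNat_of_zero_le hz
    simp [h1]
  · obtain ⟨n, hn⟩ := Int.eq_ofNat_of_zero_le (show 0 ≤ -z by omega)
    have : z = -(n : ℤ) := by omega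
    subst this
    rw [zpow_neg, ← inv_zpow, zpow_natCast, Units.val_pow_eq_pow_val, h2]
    simp

theorem XX_add {q : F} {kset : Finset (Fin M)} {x xinv : Fin M → R}
    {s : Fin M → Fin M → ℤ} {r : Fin M → Fin M → R} (h : QS q kset x xinv s r)
    (j : Fin M) (w z : ℤ) (hw : j ∉ kset → 0 ≤ w) (hz : j ∉ kset → 0 ≤ z) :
    XX x xinv j (w + z) = XX x xinv j w * XX x xinv j z := by
  by_cases hj : j ∈ kset
  · obtain ⟨u, -, -, hu⟩ := XX_unit h j hj
    rw [hu, hu, hu, zpow_add, Units.val_mul]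
  · obtain ⟨n, rfl⟩ := Int.eq_ofNat_of_zero_le (hw hj)
    obtain ⟨m, rfl⟩ := Int.eq_ofNat_of_zero_le (hz hj)
    have : ((n : ℤ) + (m : ℤ)) = ((n + m : ℕ) : ℤ) := by push_cast; rfl
    rw [this, XX_nat, XX_nat, XX_nat, pow_add]

theorem PP_step (x xinv : Fin M → R) (i : Fin M) (t : Fin M → ℤ) :
    PP x xinv i t = XX x xinv i (t i) * PP x xinv (i + 1) t := by
  unfold PP
  rw [List.drop_eq_getElem_cons (i := (i : ℕ)) (by simp)]
  simp

theorem PP_top (x xinv : Fin M → R) (i : ℕ) (hi : M ≤ i) (t : Fin M → ℤ) :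
    PP x xinv i t = 1 := by
  unfold PP
  rw [List.drop_of_length_le (by simpa using hi)]
  simp

theorem PP_congr (x xinv : Fin M → R) (i : ℕ) (t u : Fin M → ℤ)
    (htu : ∀ j : Fin M, i ≤ (j : ℕ) → t j = u j) : PP x xinv i t = PP x xinv i u := by
  unfold PP
  congr 1
  apply List.map_congr_left
  intro j hj
  rw [htu j]
  rw [List.mem_drop_iff_getElem] at hj
  obtain ⟨k, hk, rfl⟩ := hj
  simp

theorem PP_skip (x xinv : Fin M → R) (i l : ℕ) (hil : i ≤ l) (t : Fin M → ℤ)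
    (ht : ∀ j : Fin M, i ≤ (j : ℕ) → (j : ℕ) < l → t j = 0) :
    PP x xinv i t = PP x xinv l t := by
  induction l, hil using Nat.le_induction with
  | base => rfl
  | succ l hl ih =>
    rw [ih (fun j h1 h2 => ht j h1 (by omega))]
    by_cases hM : l < M
    · have := PP_step x xinv ⟨l, hM⟩ t
      simp only at this
      rw [this, ht ⟨l, hM⟩ hl (by simp), XX_zero, one_mul]
    · rw [PP_top _ _ _ (by omega), PP_top _ _ _ (by omega)]

theorem PP_single (x xinv : Fin M → R) (i : ℕ) (j : Fin M) (hij : i ≤ (j : ℕ)) (z : ℤ) :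
    PP x xinv i (Pi.single j z) = XX x xinv j z := by
  rw [PP_skip x xinv i j hij, PP_step, PP_skip x xinv (j + 1) (max M (j + 1)) (by simp),
    PP_top x xinv _ (by simp)]
  · simp
  · intro k h1 h2
    apply Pi.single_eq_of_ne
    intro hk; subst hk; omega
  · intro k h1 h2
    apply Pi.single_eq_of_ne
    intro hk; subst hk; omega

theorem XX_mul_PP (x xinv : Fin M → R) (i : Fin M) (w : ℤ) (v : Fin M → ℤ) :
    XX x xinv i w * PP x xinv (i + 1) v = PP x xinv i (Function.update v i w) := by
  rw [PP_step]
  congr 1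
  · simp
  · apply PP_congr
    intro j hj
    rw [Function.update_of_ne]
    intro hk; subst hk; omega

theorem Adm_update {kset : Finset (Fin M)} {v : Fin M → ℤ} (hv : Adm kset v) (i : Fin M) (w : ℤ)
    (hw : i ∉ kset → 0 ≤ w) : Adm kset (Function.update v i w) := by
  intro j hj
  by_cases hji : j = i
  · subst hji; simpa using hw hj
  · rw [Function.update_of_ne hji]; exact hv j hj

theorem Adm_add {kset : Finset (Fin M)} {u v : Fin M → ℤ} (hu : Adm kset u) (hv : Adm kset v) :
    Adm kset (u + v) := fun j hj => add_nonneg (hu j hj) (hv j hj)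

theorem XX_mem_AA (kset : Finset (Fin M)) (x xinv : Fin M → R) (i : ℕ) (j : Fin M)
    (hij : i ≤ (j : ℕ)) (z : ℤ) (hz : j ∉ kset → 0 ≤ z) : XX x xinv j z ∈ AA F kset x xinv i := by
  apply Submodule.subset_span
  refine ⟨Pi.single j z, ?_, (PP_single x xinv i j hij z).symm⟩
  intro k hk
  by_cases hkj : k = j
  · subst hkj; simpa using hz hk
  · rw [Pi.single_eq_of_ne hkj]

theorem one_mem_AA (kset : Finset (Fin M)) (x xinv : Fin M → R) (i : ℕ) :
    (1 : R) ∈ AA F kset x xinv i := by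
  apply Submodule.subset_span
  refine ⟨0, fun j _ => le_rfl, ?_⟩
  rw [PP_skip x xinv i (max M i) (by simp) 0 (fun _ _ _ => rfl), PP_top x xinv _ (by simp)]

/-- The leading-term product property of the tail algebra. -/
def Main (q : F) (kset : Finset (Fin M)) (x xinv : Fin M → R) (i : ℕ) : Prop :=
  ∀ t t', Adm kset t → Adm kset t' → ∃ k : ℤ,
    PP x xinv i t * PP x xinv i t' - q ^ k • PP x xinv i (t + t') ∈ VV F kset x xinv i (t + t')

theorem VV_le_AA (kset : Finset (Fin M)) (x xinv : Fin M → R) (i : ℕ) (t : Fin M → ℤ) :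
    VV F kset x xinv i t ≤ AA F kset x xinv i := by
  apply Submodule.span_mono
  rintro w ⟨u, hu, -, rfl⟩
  exact ⟨u, hu, rfl⟩

theorem AA_mul {q : F} {kset : Finset (Fin M)} {x xinv : Fin M → R} {i : ℕ}
    (hm : Main q kset x xinv i) {a b : R} (ha : a ∈ AA F kset x xinv i)
    (hb : b ∈ AA F kset x xinv i) : a * b ∈ AA F kset x xinv i := by
  have : AA F kset x xinv i * AA F kset x xinv i ≤ AA F kset x xinv i := by
    conv_lhs => unfold AA
    rw [Submodule.span_mul_span, Submodule.span_le]
    rintro _ ⟨_, ⟨t, ht, rfl⟩, _, ⟨t', ht', rfl⟩, rfl⟩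
    obtain ⟨k, hk⟩ := hm t t' ht ht'
    have h1 := VV_le_AA kset x xinv i _ hk
    have h2 : q ^ k • PP x xinv i (t + t') ∈ AA F kset x xinv i :=
      Submodule.smul_mem _ _ (Submodule.subset_span ⟨_, Adm_add ht ht', rfl⟩)
    simpa using add_mem h1 h2
  exact this (Submodule.mul_mem_mul ha hb)

theorem comm_step {q : F} {kset : Finset (Fin M)} {x xinv : Fin M → R}
    {s : Fin M → Fin M → ℤ} {r : Fin M → Fin M → R} (h : QS q kset x xinv s r)
    (i : Fin M) (hm : Main q kset x xinv (i + 1)) (B : Submodule F R)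
    (hB1 : ∀ a ∈ AA F kset x xinv (i + 1), ∀ b ∈ B, a * b ∈ B)
    (hB2 : ∀ a ∈ AA F kset x xinv (i + 1), ∀ b ∈ B, b * a ∈ B)
    (hr : ∀ j, i < j → r i j ∈ B) (t : Fin M → ℤ) (ht : Adm kset t) :
    ∃ k : ℤ, PP x xinv (i + 1) t * x i - q ^ k • (x i * PP x xinv (i + 1) t) ∈ B := by
  let T : Submonoid R :=
    { carrier := {a | a ∈ AA F kset x xinv (i + 1) ∧ ∃ k : ℤ, a * x i - q ^ k • (x i * a) ∈ B}
      one_mem' := ⟨one_mem_AA kset x xinv _, 0, by simp⟩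
      mul_mem' := by
        rintro a b ⟨ha, k, hk⟩ ⟨hb, l, hl⟩
        refine ⟨AA_mul hm ha hb, l + k, ?_⟩
        have e : a * b * x i - q ^ (l + k) • (x i * (a * b)) =
            a * (b * x i - q ^ l • (x i * b)) + q ^ l • ((a * x i - q ^ k • (x i * a)) * b) := by
          rw [zpow_add₀ h.hq]
          simp only [mul_sub, sub_mul, smul_sub, mul_smul_comm, smul_mul_assoc, smul_smul,
            mul_assoc]
          abel
        rw [e]
        exact add_mem (hB1 _ ha _ hl) (Submodule.smul_mem _ _ (hB2 _ hb _ hk)) }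
  have hx : ∀ j, i < j → x j ∈ T := by
    intro j hij
    refine ⟨?_, -(s i j), ?_⟩
    · rw [← XX_one x xinv j]
      exact XX_mem_AA kset x xinv _ j (by omega) 1 (by simp)
    · have e : x j * x i - q ^ (-(s i j)) • (x i * x j) = - (q ^ (-(s i j)) • r i j) := by
        rw [h.hrel i j hij, smul_add, smul_smul, ← zpow_add₀ h.hq]
        simp
      rw [e]
      exact neg_mem (Submodule.smul_mem _ _ (hr j hij))
  have hxi : ∀ j, i < j → j ∈ kset → xinv j ∈ T := by
    intro j hij hj
    refine ⟨?_, s i j, ?_⟩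
    · rw [← XX_neg_one x xinv j]
      exact XX_mem_AA kset x xinv _ j (by omega) (-1) (fun h' => absurd hj h')
    · have e := h.hrel i j hij
      rw [h.hrdist i j hij (Or.inr hj), add_zero] at e
      have e2 : xinv j * (x i * x j) * xinv j = xinv j * (q ^ s i j • (x j * x i)) * xinv j := by
        rw [e]
      have e3 : xinv j * x i = q ^ s i j • (x i * xinv j) := by
        have h1 := (h.hinv j hj).1
        have h2 := (h.hinv j hj).2
        calc xinv j * x i = xinv j * x i * (x j * xinv j) := by rw [h1, mul_one]
          _ = xinv j * (x i * x j) * xinv j := by simp only [mul_assoc]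
          _ = _ := e2
          _ = q ^ s i j • ((xinv j * x j) * x i * xinv j) := by
            simp only [mul_smul_comm, smul_mul_assoc, mul_assoc]
          _ = _ := by rw [h2, one_mul]
      rw [e3, sub_self]
      exact zero_mem _
  have hP : PP x xinv (i + 1) t ∈ T := by
    unfold PP
    apply Submonoid.list_prod_mem
    intro y hy
    rw [List.mem_map] at hy
    obtain ⟨j, hj, rfl⟩ := hy
    have hij : i < j := by
      rw [List.mem_drop_iff_getElem] at hj
      obtain ⟨k, hk, rfl⟩ := hj
      simp [Fin.lt_def]
      omega
    unfold XX
    split_ifs with hz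
    · exact pow_mem (hx j hij) _
    · exact pow_mem (hxi j hij (by_contra fun hc => hz (ht j hc))) _
  exact hP.2

theorem r_mem_AA {q : F} {kset : Finset (Fin M)} {x xinv : Fin M → R}
    {s : Fin M → Fin M → ℤ} {r : Fin M → Fin M → R} (h : QS q kset x xinv s r)
    (i j : Fin M) (hij : i < j) : r i j ∈ AA F kset x xinv (i + 1) := by
  refine Submodule.span_mono ?_ (h.hr i j hij)
  rintro w ⟨t, h1, h2, rfl⟩
  refine ⟨t, fun p _ => h2 p, ?_⟩
  change PP x xinv 0 t = _
  apply PP_skip x xinv 0 _ (by omega)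
  intro p _ hp
  by_contra hne
  have := (h1 p hne).1
  omega

theorem comm_pow {q : F} {kset : Finset (Fin M)} {x xinv : Fin M → R}
    {s : Fin M → Fin M → ℤ} {r : Fin M → Fin M → R} (h : QS q kset x xinv s r)
    (i : Fin M) (hm : Main q kset x xinv (i + 1)) (t : Fin M → ℤ) (ht : Adm kset t)
    (z : ℤ) (hz : i ∉ kset → 0 ≤ z) :
    ∃ k : ℤ, PP x xinv (i + 1) t * XX x xinv i z - q ^ k • (XX x xinv i z * PP x xinv (i + 1) t)
      ∈ LL F kset x xinv i z := by
  by_cases hi : i ∈ kset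
  · obtain ⟨k, hk⟩ := comm_step h i hm ⊥ (by simp) (by simp)
      (fun j hij => by simp [h.hrdist i j hij (Or.inl hi)]) t ht
    obtain ⟨u, hu1, hu2, hu⟩ := XX_unit h i hi
    set a := PP x xinv (i + 1) t
    rw [Submodule.mem_bot, sub_eq_zero, ← hu1] at hk
    refine ⟨z * k, ?_⟩
    have key : ∀ z : ℤ, a * ((u ^ z : Rˣ) : R) = q ^ (z * k) • (((u ^ z : Rˣ) : R) * a) := by
      intro z
      induction z using Int.induction_on with
      | zero => simp
      | succ n ih =>
        rw [zpow_add_one, Units.val_mul, ← mul_assoc, ih, smul_mul_assoc, mul_assoc, hk,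
          add_mul, one_mul, zpow_add₀ h.hq, mul_smul_comm, smul_smul, mul_assoc]
      | pred n ih =>
        have e : a * ((u⁻¹ : Rˣ) : R) = q ^ (-k) • (((u⁻¹ : Rˣ) : R) * a) := by
          have : ((u⁻¹ : Rˣ) : R) * (a * u) * ((u⁻¹ : Rˣ) : R) =
            ((u⁻¹ : Rˣ) : R) * (q ^ k • (u * a)) * ((u⁻¹ : Rˣ) : R) := by rw [hk]
          rw [mul_smul_comm, Units.inv_mul_cancel_left, ← mul_assoc, Units.mul_inv_cancel_right,
            smul_mul_assoc] at this
          rw [this, smul_smul, ← zpow_add₀ h.hq]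
          simp
        rw [zpow_sub_one, Units.val_mul, ← mul_assoc, ih, smul_mul_assoc, mul_assoc, e,
          sub_mul, one_mul, sub_eq_add_neg, zpow_add₀ h.hq, mul_smul_comm, smul_smul, mul_assoc]
    rw [hu, key, sub_self]
    exact zero_mem _
  · obtain ⟨n, rfl⟩ := Int.eq_ofNat_of_zero_le (hz hi)
    have cs := comm_step h i hm (AA F kset x xinv (i + 1)) (fun a ha b hb => AA_mul hm ha hb)
      (fun a ha b hb => AA_mul hm hb ha) (fun j hij => r_mem_AA h i j hij)
    have hA : ∀ (m n : ℕ), m < n → ∀ a ∈ AA F kset x xinv (i + 1),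
        x i ^ m * a ∈ LL F kset x xinv i n := by
      intro m n hmn a ha
      unfold AA at ha
      induction ha using Submodule.span_induction with
      | mem y hy =>
        obtain ⟨v, hv, rfl⟩ := hy
        exact Submodule.subset_span ⟨m, v, by exact_mod_cast hmn, fun _ => by positivity, hv,
          by rw [XX_nat]⟩
      | zero => simp
      | add y y' _ _ h1 h2 => rw [mul_add]; exact add_mem h1 h2
      | smul c y _ h1 => rw [mul_smul_comm]; exact Submodule.smul_mem _ _ h1
    have hL : ∀ n : ℕ, ∀ y ∈ LL F kset x xinv i n, y * x i ∈ LL F kset x xinv i (n + 1 : ℕ) := by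
      intro n y hy
      unfold LL at hy
      induction hy using Submodule.span_induction with
      | mem y hy =>
        obtain ⟨w, v, hw, hw0, hv, rfl⟩ := hy
        obtain ⟨m, rfl⟩ := Int.eq_ofNat_of_zero_le (hw0 hi)
        have hmn : m < n := by exact_mod_cast hw
        obtain ⟨k, hk⟩ := cs v hv
        have h1 := hA m (n + 1) (by omega) _ hk
        have h2 := Submodule.smul_mem _ (q ^ k) (hA (m + 1) (n + 1) (by omega) _
          (Submodule.subset_span ⟨v, hv, rfl⟩))
        have := add_mem h1 h2
        rw [XX_nat, mul_assoc]
        simpa [mul_sub, pow_succ, mul_assoc] using this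
      | zero => simp
      | add y y' _ _ h1 h2 => rw [add_mul]; exact add_mem h1 h2
      | smul c y _ h1 => rw [smul_mul_assoc]; exact Submodule.smul_mem _ _ h1
    clear hz
    rw [XX_nat]
    induction n with
    | zero => exact ⟨0, by simp⟩
    | succ n ih =>
      obtain ⟨k, hk⟩ := ih
      obtain ⟨l, hl⟩ := cs t ht
      refine ⟨k + l, ?_⟩
      have h1 := hL n _ hk
      have h2 := Submodule.smul_mem _ (q ^ k) (hA n (n + 1) (by omega) _ hl)
      have := add_mem h1 h2
      convert this using 1
      rw [zpow_add₀ h.hq, pow_succ]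
      simp only [mul_sub, sub_mul, smul_sub, mul_smul_comm, smul_mul_assoc, smul_smul, mul_assoc]
      abel

theorem lti_of_lt (i : Fin M) (u t : Fin M → ℤ) (hut : u i < t i) : lti i u t :=
  ⟨i, le_rfl, fun k h1 h2 => by omega, hut⟩

theorem lti_of_eq (i : Fin M) (u t : Fin M → ℤ) (e : u i = t i) (hut : lti (i + 1) u t) :
    lti i u t := by
  obtain ⟨j, hj, h1, h2⟩ := hut
  refine ⟨j, by omega, fun k hk hkj => ?_, h2⟩
  by_cases hki : k = i
  · rw [hki, e]
  · exact h1 k (by omega) hkj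

theorem main_step {q : F} {kset : Finset (Fin M)} {x xinv : Fin M → R}
    {s : Fin M → Fin M → ℤ} {r : Fin M → Fin M → R} (h : QS q kset x xinv s r)
    (i : Fin M) (hm : Main q kset x xinv (i + 1)) : Main q kset x xinv i := by
  intro t t' ht ht'
  obtain ⟨k, hk⟩ := comm_pow h i hm t ht (t' i) (ht' i)
  obtain ⟨l, hl⟩ := hm t t' ht ht'
  have hadd := XX_add h i (t i) (t' i) (ht i) (ht' i)
  have hP := PP_step x xinv i (t + t')
  rw [Pi.add_apply, hadd] at hP
  refine ⟨k + l, ?_⟩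
  rw [hP, PP_step x xinv i t, PP_step x xinv i t']
  set a := PP x xinv (i + 1) t
  set a' := PP x xinv (i + 1) t' with ha'
  have hA : ∀ w : ℤ, w < t i + t' i → (i ∉ kset → 0 ≤ w) → ∀ y ∈ AA F kset x xinv (i + 1),
      XX x xinv i w * y ∈ VV F kset x xinv i (t + t') := by
    intro w hw hw0 y hy
    unfold AA at hy
    induction hy using Submodule.span_induction with
    | mem y hy =>
      obtain ⟨v, hv, rfl⟩ := hy
      exact Submodule.subset_span ⟨Function.update v i w, Adm_update hv i w hw0,
        lti_of_lt i _ _ (by simpa using hw), XX_mul_PP x xinv i w v⟩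
    | zero => simp
    | add y y' _ _ h1 h2 => rw [mul_add]; exact add_mem h1 h2
    | smul c y _ h1 => rw [mul_smul_comm]; exact Submodule.smul_mem _ _ h1
  have hLow : ∀ y ∈ LL F kset x xinv i (t' i),
      XX x xinv i (t i) * (y * a') ∈ VV F kset x xinv i (t + t') := by
    intro y hy
    unfold LL at hy
    induction hy using Submodule.span_induction with
    | mem y hy =>
      obtain ⟨w, v, hw, hw0, hv, rfl⟩ := hy
      have h1 := hA (t i + w) (by omega) (fun h' => add_nonneg (ht i h') (hw0 h'))
        (PP x xinv (i + 1) v * a')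
        (AA_mul hm (Submodule.subset_span ⟨v, hv, rfl⟩) (Submodule.subset_span ⟨t', ht', rfl⟩))
      rw [XX_add h i _ _ (ht i) hw0] at h1
      simpa only [mul_assoc] using h1
    | zero => simp
    | add y y' _ _ h1 h2 => rw [add_mul, mul_add]; exact add_mem h1 h2
    | smul c y _ h1 => rw [smul_mul_assoc, mul_smul_comm]; exact Submodule.smul_mem _ _ h1
  have hV : ∀ y ∈ VV F kset x xinv (i + 1) (t + t'),
      XX x xinv i (t i + t' i) * y ∈ VV F kset x xinv i (t + t') := by
    intro y hy
    unfold VV at hy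
    induction hy using Submodule.span_induction with
    | mem y hy =>
      obtain ⟨v, hv, hlt, rfl⟩ := hy
      refine Submodule.subset_span ⟨Function.update v i (t i + t' i),
        Adm_update hv i _ (fun h' => add_nonneg (ht i h') (ht' i h')), ?_,
        XX_mul_PP x xinv i _ v⟩
      apply lti_of_eq
      · simp
      · obtain ⟨j, hj, h1, h2⟩ := hlt
        have hne : ∀ k : Fin M, (i : ℕ) + 1 ≤ k → k ≠ i := by
          intro k hk hki; subst hki; omega
        refine ⟨j, hj, fun k hk hkj => ?_, ?_⟩
        · rw [Function.update_of_ne (hne k hk)]; exact h1 k hk hkj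
        · rw [Function.update_of_ne (hne j hj)]; exact h2
    | zero => simp
    | add y y' _ _ h1 h2 => rw [mul_add]; exact add_mem h1 h2
    | smul c y _ h1 => rw [mul_smul_comm]; exact Submodule.smul_mem _ _ h1
  have h1 := hLow _ hk
  have h2 := Submodule.smul_mem _ (q ^ k) (hV _ hl)
  have h3 := add_mem h1 h2
  rw [hadd] at h3
  convert h3 using 1
  rw [zpow_add₀ h.hq]
  simp only [mul_sub, sub_mul, smul_sub, mul_smul_comm, smul_mul_assoc, smul_smul, mul_assoc]
  abel

theorem main_zero {q : F} {kset : Finset (Fin M)} {x xinv : Fin M → R}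
    {s : Fin M → Fin M → ℤ} {r : Fin M → Fin M → R} (h : QS q kset x xinv s r) :
    Main q kset x xinv 0 := by
  have : ∀ d i : ℕ, i + d = M → Main q kset x xinv i := by
    intro d
    induction d with
    | zero =>
      intro i hi t t' _ _
      refine ⟨0, ?_⟩
      rw [PP_top _ _ _ (by omega), PP_top _ _ _ (by omega), PP_top _ _ _ (by omega)]
      simp
    | succ d ih =>
      intro i hi
      exact main_step h ⟨i, by omega⟩ (ih (i + 1) (by omega))
  exact this M 0 (by omega)


theorem lti_trans {i : ℕ} {u v w : Fin M → ℤ} (h1 : lti i u v) (h2 : lti i v w) : lti i u w := by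
  obtain ⟨j, hj, a1, a2⟩ := h1
  obtain ⟨k, hk, b1, b2⟩ := h2
  rcases lt_trichotomy j k with hjk | hjk | hjk
  · exact ⟨j, hj, fun l hl hlj => (a1 l hl hlj).trans (b1 l hl (hlj.trans hjk)),
      by rw [← b1 j hj hjk]; exact a2⟩
  · subst hjk
    exact ⟨j, hj, fun l hl hlj => (a1 l hl hlj).trans (b1 l hl hlj), a2.trans b2⟩
  · exact ⟨k, hk, fun l hl hlk => (a1 l hl (hlk.trans hjk)).trans (b1 l hl hlk),
      by rw [a1 k hk hjk]; exact b2⟩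

theorem lti_add_right {i : ℕ} {u v : Fin M → ℤ} (h1 : lti i u v) (w : Fin M → ℤ) :
    lti i (u + w) (v + w) := by
  obtain ⟨j, hj, a1, a2⟩ := h1
  exact ⟨j, hj, fun l hl hlj => by simp [a1 l hl hlj], by simpa using a2⟩

theorem lti_add_left {i : ℕ} {u v : Fin M → ℤ} (h1 : lti i u v) (w : Fin M → ℤ) :
    lti i (w + u) (w + v) := by
  rw [add_comm w u, add_comm w v]; exact lti_add_right h1 w

theorem lti_irrefl {i : ℕ} (u : Fin M → ℤ) : ¬ lti i u u := by
  rintro ⟨j, -, -, h⟩; exact lt_irrefl _ h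

theorem lti_of_toLex {u v : Fin M → ℤ} (h : toLex u < toLex v) : lti 0 u v := by
  obtain ⟨j, h1, h2⟩ := h
  exact ⟨j, by omega, fun k _ hk => h1 k hk, h2⟩

theorem VV_mono {kset : Finset (Fin M)} {x xinv : Fin M → R} {i : ℕ} {u t : Fin M → ℤ}
    (h : lti i u t) : VV F kset x xinv i u ≤ VV F kset x xinv i t := by
  apply Submodule.span_mono
  rintro w ⟨v, hv, hvu, rfl⟩
  exact ⟨v, hv, lti_trans hvu h, rfl⟩

variable (F) in
/-- Terms of degree at most `t`. -/
def WW (kset : Finset (Fin M)) (x xinv : Fin M → R) (i : ℕ) (t : Fin M → ℤ) : Submodule F R :=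
  Submodule.span F {w | ∃ u, Adm kset u ∧ (u = t ∨ lti i u t) ∧ w = PP x xinv i u}

theorem VV_le_WW {kset : Finset (Fin M)} {x xinv : Fin M → R} {i : ℕ} {t : Fin M → ℤ} :
    VV F kset x xinv i t ≤ WW F kset x xinv i t := by
  apply Submodule.span_mono
  rintro w ⟨v, hv, hvu, rfl⟩
  exact ⟨v, hv, Or.inr hvu, rfl⟩

theorem PP_mul_mem {q : F} {kset : Finset (Fin M)} {x xinv : Fin M → R} {i : ℕ}
    (hm : Main q kset x xinv i) {u v t : Fin M → ℤ} (hu : Adm kset u) (hv : Adm kset v)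
    (h : lti i (u + v) t) : PP x xinv i u * PP x xinv i v ∈ VV F kset x xinv i t := by
  obtain ⟨k, hk⟩ := hm u v hu hv
  have h1 := VV_mono h hk
  have h2 : q ^ k • PP x xinv i (u + v) ∈ VV F kset x xinv i t :=
    Submodule.smul_mem _ _ (Submodule.subset_span ⟨_, Adm_add hu hv, h, rfl⟩)
  simpa using add_mem h1 h2

theorem VV_mul_WW {q : F} {kset : Finset (Fin M)} {x xinv : Fin M → R} {i : ℕ}
    (hm : Main q kset x xinv i) {t t' : Fin M → ℤ} {a b : R} (ha : a ∈ VV F kset x xinv i t)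
    (hb : b ∈ WW F kset x xinv i t') : a * b ∈ VV F kset x xinv i (t + t') := by
  have : VV F kset x xinv i t * WW F kset x xinv i t' ≤ VV F kset x xinv i (t + t') := by
    conv_lhs => unfold VV WW
    rw [Submodule.span_mul_span, Submodule.span_le]
    rintro _ ⟨_, ⟨u, hu, hut, rfl⟩, _, ⟨v, hv, hvt, rfl⟩, rfl⟩
    apply PP_mul_mem hm hu hv
    rcases hvt with rfl | hvt
    · exact lti_add_right hut _
    · exact lti_trans (lti_add_right hut _) (lti_add_left hvt _)
  exact this (Submodule.mul_mem_mul ha hb)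

theorem WW_mul_VV {q : F} {kset : Finset (Fin M)} {x xinv : Fin M → R} {i : ℕ}
    (hm : Main q kset x xinv i) {t t' : Fin M → ℤ} {a b : R} (ha : a ∈ WW F kset x xinv i t)
    (hb : b ∈ VV F kset x xinv i t') : a * b ∈ VV F kset x xinv i (t + t') := by
  have : WW F kset x xinv i t * VV F kset x xinv i t' ≤ VV F kset x xinv i (t + t') := by
    conv_lhs => unfold VV WW
    rw [Submodule.span_mul_span, Submodule.span_le]
    rintro _ ⟨_, ⟨u, hu, hut, rfl⟩, _, ⟨v, hv, hvt, rfl⟩, rfl⟩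
    apply PP_mul_mem hm hu hv
    rcases hut with rfl | hut
    · exact lti_add_left hvt _
    · exact lti_trans (lti_add_right hut _) (lti_add_left hvt _)
  exact this (Submodule.mul_mem_mul ha hb)

/-- `y` has leading term `c • PP t`. -/
def Ld (kset : Finset (Fin M)) (x xinv : Fin M → R) (t : Fin M → ℤ) (c : F) (y : R) : Prop :=
  y - c • PP x xinv 0 t ∈ VV F kset x xinv 0 t

theorem PP_mem_WW {kset : Finset (Fin M)} {x xinv : Fin M → R} {i : ℕ} {t : Fin M → ℤ}
    (ht : Adm kset t) : PP x xinv i t ∈ WW F kset x xinv i t :=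
  Submodule.subset_span ⟨t, ht, Or.inl rfl, rfl⟩

theorem Ld.mem_WW {kset : Finset (Fin M)} {x xinv : Fin M → R} {t : Fin M → ℤ} {c : F} {y : R}
    (ht : Adm kset t) (h : Ld kset x xinv t c y) : y ∈ WW F kset x xinv 0 t := by
  have := add_mem (VV_le_WW h) (Submodule.smul_mem _ c (PP_mem_WW (x := x) (xinv := xinv)
    (i := 0) ht))
  simpa using this

theorem Ld_mul {q : F} {kset : Finset (Fin M)} {x xinv : Fin M → R}
    (hm : Main q kset x xinv 0) {t t' : Fin M → ℤ} (ht : Adm kset t) (ht' : Adm kset t') :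
    ∃ k : ℤ, ∀ c y c' y', Ld kset x xinv t c y → Ld kset x xinv t' c' y' →
      Ld kset x xinv (t + t') (c * c' * q ^ k) (y * y') := by
  obtain ⟨k, hk⟩ := hm t t' ht ht'
  refine ⟨k, fun c y c' y' h h' => ?_⟩
  have h1 := VV_mul_WW hm h (h'.mem_WW ht')
  have h2 := Submodule.smul_mem _ c (WW_mul_VV hm (PP_mem_WW ht) h')
  have h3 := Submodule.smul_mem _ (c * c') hk
  have h4 := add_mem (add_mem h1 h2) h3
  unfold Ld
  convert h4 using 1
  simp only [mul_sub, sub_mul, smul_sub, mul_smul_comm, smul_mul_assoc, smul_smul]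
  abel

theorem exists_Ld {kset : Finset (Fin M)} {x xinv : Fin M → R}
    (hspan : Submodule.span F
      (Set.range fun t : {t : Fin M → ℤ // ∀ j ∉ kset, 0 ≤ t j} =>
        orderedMonomial x xinv t.1) = ⊤) (y : R) (hy : y ≠ 0) :
    ∃ (t : Fin M → ℤ) (c : F), Adm kset t ∧ c ≠ 0 ∧ Ld kset x xinv t c y := by
  have : y ∈ Submodule.span F
      (Set.range fun t : {t : Fin M → ℤ // ∀ j ∉ kset, 0 ≤ t j} =>
        orderedMonomial x xinv t.1) := hspan ▸ Submodule.mem_top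
  rw [Finsupp.mem_span_range_iff_exists_finsupp] at this
  obtain ⟨l, rfl⟩ := this
  have hne : l.support.Nonempty := by
    rw [Finsupp.support_nonempty_iff]
    rintro rfl
    simp at hy
  obtain ⟨t, ht, hmax⟩ := l.support.exists_max_image (fun t => toLex t.1) hne
  refine ⟨t.1, l t, t.2, by simpa using ht, ?_⟩
  unfold Ld
  rw [Finsupp.sum, ← Finset.sum_erase_add _ _ ht]
  change _ + l t • PP x xinv 0 t.1 - _ ∈ _
  rw [add_sub_cancel_right]
  apply Submodule.sum_mem
  intro u hu
  rw [Finset.mem_erase] at hu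
  refine Submodule.smul_mem _ _ (Submodule.subset_span ⟨u.1, u.2, lti_of_toLex ?_, rfl⟩)
  refine lt_of_le_of_ne (hmax u hu.2) fun h => hu.1 (Subtype.ext (toLex.injective h))

theorem PP_notMem {kset : Finset (Fin M)} {x xinv : Fin M → R}
    (hind : LinearIndependent F
      fun t : {t : Fin M → ℤ // ∀ j ∉ kset, 0 ≤ t j} => orderedMonomial x xinv t.1)
    {t : Fin M → ℤ} (ht : Adm kset t) : PP x xinv 0 t ∉ VV F kset x xinv 0 t := by
  have := hind.notMem_span_image (s := {u | lti 0 u.1 t}) (x := ⟨t, ht⟩)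
    (fun h => lti_irrefl t h)
  intro hc
  apply this
  refine Submodule.span_mono ?_ hc
  rintro w ⟨u, hu, hut, rfl⟩
  exact ⟨⟨u, hu⟩, hut, rfl⟩

theorem key_eigen {q : F} (hq : q ≠ 0) {kset : Finset (Fin M)} {x xinv : Fin M → R}
    (hm : Main q kset x xinv 0)
    (hind : LinearIndependent F
      fun t : {t : Fin M → ℤ // ∀ j ∉ kset, 0 ≤ t j} => orderedMonomial x xinv t.1)
    (hspan : Submodule.span F
      (Set.range fun t : {t : Fin M → ℤ // ∀ j ∉ kset, 0 ≤ t j} =>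
        orderedMonomial x xinv t.1) = ⊤) (y b : R) (hy : y ≠ 0) (hb : b ≠ 0) :
    ∃ k : ℤ, ∀ (N : ℕ) (p : ℕ → F),
      ∑ i ∈ Finset.range (N + 1), p i • (y ^ i * b * y ^ (N - i)) = 0 →
      ∑ i ∈ Finset.range (N + 1), p i * (q ^ k) ^ i = 0 := by
  obtain ⟨m, ξ, hmA, hξ, hLy⟩ := exists_Ld hspan y hy
  obtain ⟨n, β, hnA, hβ, hLb⟩ := exists_Ld hspan b hb
  obtain ⟨k1, hk1⟩ := Ld_mul hm hmA hnA
  obtain ⟨k2, hk2⟩ := Ld_mul hm hnA hmA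
  have e1 := hk1 _ _ _ _ hLy hLb
  have e2 := hk2 _ _ _ _ hLb hLy
  set α := q ^ (k1 - k2) with hα
  have hz : y * b - α • (b * y) ∈ VV F kset x xinv 0 (m + n) := by
    unfold Ld at e1 e2
    rw [add_comm n m] at e2
    have := sub_mem e1 (Submodule.smul_mem _ α e2)
    convert this using 1
    have : α * (β * ξ * q ^ k2) = ξ * β * q ^ k1 := by
      rw [hα, zpow_sub₀ hq]
      have := zpow_ne_zero k2 hq
      field_simp
    rw [smul_sub, smul_smul, this]
    abel
  have hAm : ∀ i : ℕ, Adm kset (i • m) := by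
    intro i j hj
    simpa using mul_nonneg (Int.natCast_nonneg i) (hmA j hj)
  have hLpow : ∀ j : ℕ, ∃ c : F, c ≠ 0 ∧ Ld kset x xinv (n + j • m) c (b * y ^ j) := by
    intro j
    induction j with
    | zero => exact ⟨β, hβ, by simpa using hLb⟩
    | succ j ih =>
      obtain ⟨c, hc, hL⟩ := ih
      obtain ⟨k, hk⟩ := Ld_mul hm (Adm_add hnA (hAm j)) hmA
      refine ⟨c * ξ * q ^ k, ?_, ?_⟩
      rotate_left
      · have := hk _ _ _ _ hL hLy
        rw [succ_nsmul, pow_succ, ← add_assoc, ← mul_assoc]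
        exact this
      · exact mul_ne_zero (mul_ne_zero hc hξ) (zpow_ne_zero _ hq)
  have hL : ∀ (i : ℕ) (t : Fin M → ℤ) (z : R), z ∈ VV F kset x xinv 0 t →
      y ^ i * z ∈ VV F kset x xinv 0 (i • m + t) := by
    intro i t z hz
    induction i with
    | zero => simpa using hz
    | succ i ih =>
      rw [pow_succ', mul_assoc, succ_nsmul', add_assoc]
      exact WW_mul_VV hm (hLy.mem_WW hmA) ih
  have hR : ∀ (i : ℕ) (t : Fin M → ℤ) (z : R), z ∈ VV F kset x xinv 0 t →
      z * y ^ i ∈ VV F kset x xinv 0 (t + i • m) := by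
    intro i t z hz
    induction i with
    | zero => simpa using hz
    | succ i ih =>
      rw [pow_succ, ← mul_assoc, succ_nsmul, ← add_assoc]
      exact VV_mul_WW hm ih (hLy.mem_WW hmA)
  refine ⟨k1 - k2, fun N p hp => ?_⟩
  rw [← hα]
  have hpow : ∀ i : ℕ, i ≤ N → y ^ i * b * y ^ (N - i) - α ^ i • (b * y ^ N) ∈
      VV F kset x xinv 0 (n + N • m) := by
    intro i hi
    induction i with
    | zero => simp
    | succ i ih =>
      obtain ⟨j, rfl⟩ := Nat.exists_eq_add_of_le hi
      have h1 := Submodule.smul_mem _ α (ih (by omega))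
      have h2 := hL i _ _ (hR j _ _ hz)
      have h3 : i • m + (m + n + j • m) = n + (i + 1 + j) • m := by
        simp only [add_smul, one_smul]; abel
      rw [h3] at h2
      have h4 := add_mem h1 h2
      have h5 : i + 1 + j - i = j + 1 := by omega
      have h6 : i + 1 + j - (i + 1) = j := by omega
      rw [h5] at h4
      rw [h6]
      convert h4 using 1
      simp only [mul_sub, sub_mul, smul_sub, mul_smul_comm, smul_mul_assoc, smul_smul, pow_succ y i,
        pow_succ' y j, pow_succ' α i, mul_assoc]
      abel
  by_contra hne
  set S := ∑ i ∈ Finset.range (N + 1), p i * α ^ i with hS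
  have hsum : ∑ i ∈ Finset.range (N + 1),
      p i • (y ^ i * b * y ^ (N - i) - α ^ i • (b * y ^ N)) ∈ VV F kset x xinv 0 (n + N • m) := by
    apply Submodule.sum_mem
    intro i hi
    exact Submodule.smul_mem _ _ (hpow i (by rw [Finset.mem_range] at hi; omega))
  simp only [smul_sub, Finset.sum_sub_distrib, hp, smul_smul, ← Finset.sum_smul, zero_sub] at hsum
  rw [← hS, neg_mem_iff, Submodule.smul_mem_iff _ hne] at hsum
  obtain ⟨c, hc, hLc⟩ := hLpow N
  have h7 := sub_mem hsum hLc
  rw [sub_sub_cancel, Submodule.smul_mem_iff _ hc] at h7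
  exact PP_notMem hind (Adm_add hnA (hAm N)) h7

theorem Phi_step (y b : R) (α : F) (g : Polynomial F) (N : ℕ) (hg : g.natDegree ≤ N) :
    ∑ i ∈ Finset.range (N + 1 + 1),
      ((Polynomial.X - Polynomial.C α) * g).coeff i • (y ^ i * b * y ^ (N + 1 - i)) =
    ∑ i ∈ Finset.range (N + 1), g.coeff i • (y ^ i * (y * b - α • (b * y)) * y ^ (N - i)) := by
  simp only [sub_mul, Polynomial.coeff_sub, Polynomial.coeff_C_mul, sub_smul,
    Finset.sum_sub_distrib]
  rw [Finset.sum_range_succ', Finset.sum_range_succ (fun i => (α * g.coeff i) • _),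
    Polynomial.coeff_eq_zero_of_natDegree_lt (Nat.lt_succ_of_le hg)]
  simp only [Polynomial.coeff_X_mul, Polynomial.coeff_X_mul_zero, zero_smul, mul_zero, add_zero]
  rw [← Finset.sum_sub_distrib]
  apply Finset.sum_congr rfl
  intro i hi
  rw [Finset.mem_range] at hi
  have h5 : N + 1 - i = (N - i) + 1 := by omega
  have h6 : N + 1 - (i + 1) = N - i := by omega
  rw [h5, h6]
  simp only [mul_sub, sub_mul, smul_sub, mul_smul_comm, smul_mul_assoc, smul_smul, pow_succ y i,
        pow_succ' y (N - i), mul_assoc, mul_comm α]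

theorem split_exists {q : F} (y : R)
    (key : ∀ b : R, b ≠ 0 → ∃ k : ℤ, ∀ (N : ℕ) (p : ℕ → F),
      ∑ i ∈ Finset.range (N + 1), p i • (y ^ i * b * y ^ (N - i)) = 0 →
      ∑ i ∈ Finset.range (N + 1), p i * (q ^ k) ^ i = 0) (N : ℕ) :
    ∀ (p : Polynomial F) (b : R), p ≠ 0 → p.natDegree = N →
      ∑ i ∈ Finset.range (N + 1), p.coeff i • (y ^ i * b * y ^ (N - i)) = 0 →
      ∃ (L : ℕ) (e : Fin L → ℤ), ∑ i ∈ Finset.range (L + 1),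
        (∏ w : Fin L, (Polynomial.X - Polynomial.C (q ^ (e w)))).coeff i •
          (y ^ i * b * y ^ (L - i)) = 0 := by
  induction N with
  | zero =>
    intro p b hp hN h
    refine ⟨0, Fin.elim0, ?_⟩
    have hc : p.coeff 0 ≠ 0 := by
      rw [← hN]; exact Polynomial.leadingCoeff_ne_zero.mpr hp
    have : b = 0 := by
      simpa [hc] using h
    simp [this]
  | succ N ih =>
    intro p b hp hN h
    by_cases hb : b = 0
    · exact ⟨0, Fin.elim0, by simp [hb]⟩
    obtain ⟨k, hk⟩ := key b hb
    have hroot := hk _ _ h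
    rw [← hN, ← Polynomial.eval_eq_sum_range] at hroot
    obtain ⟨g, rfl⟩ := Polynomial.dvd_iff_isRoot.mpr hroot
    have hg : g ≠ 0 := right_ne_zero_of_mul hp
    have hgN : g.natDegree = N := by
      rw [Polynomial.natDegree_mul (Polynomial.X_sub_C_ne_zero _) hg,
        Polynomial.natDegree_X_sub_C] at hN
      omega
    rw [Phi_step _ _ _ _ _ hgN.le] at h
    obtain ⟨L, e, he⟩ := ih g _ hg hgN h
    refine ⟨L + 1, Fin.cons k e, ?_⟩
    simp only [Fin.prod_univ_succ, Fin.cons_zero, Fin.cons_succ]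
    rw [Phi_step]
    · exact he
    · refine (Polynomial.natDegree_prod_le _ _).trans ?_
      simp

end QSolv

/-- Proposition 2.13: in a quantum solvable algebra `R` over `C = K(q)` (a
localization of `K[q,q⁻¹]`) — i.e. `R` is generated by `x₁, …, x_M` (those with
index in the distinguished set `kset` being invertible), the ordered monomials form
a free `C`-basis, `xᵢ xⱼ = q^{s_{ij}} xⱼ xᵢ + r_{ij}` for `i < j` with `r_{ij}` a
`C`-combination of (nonnegative) monomials in `x_{i+1}, …, x_{j-1}` only, pure
`q`-commutation with the distinguished generators, and `(s_{ij})` skew-symmetric —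
every FA-element is an FA_q-element: for every `a ∈ R` the polynomial in the
FA-relation may be chosen to split with all roots in `Γ = {q^k : k ∈ ℤ}`. -/
theorem quantum_solvable_FA_is_FAq {K : Type*} [Field K] [CharZero K] [IsAlgClosed K]
    {R : Type*} [Ring R] [IsDomain R] [Algebra (RatFunc K) R]
    (M : ℕ) (kset : Finset (Fin M))
    (x xinv : Fin M → R)
    (hinv : ∀ j ∈ kset, x j * xinv j = 1 ∧ xinv j * x j = 1)
    (s : Fin M → Fin M → ℤ) (hskew : ∀ i j, s i j = - s j i)
    (hbasisInd : LinearIndependent (RatFunc K)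
      fun t : {t : Fin M → ℤ // ∀ j ∉ kset, 0 ≤ t j} => orderedMonomial x xinv t.1)
    (hbasisSpan : Submodule.span (RatFunc K)
      (Set.range fun t : {t : Fin M → ℤ // ∀ j ∉ kset, 0 ≤ t j} =>
        orderedMonomial x xinv t.1) = ⊤)
    (r : Fin M → Fin M → R)
    (hrel : ∀ i j : Fin M, i < j →
      x i * x j = ((RatFunc.X : RatFunc K) ^ (s i j)) • (x j * x i) + r i j)
    (hr : ∀ i j : Fin M, i < j → r i j ∈ Submodule.span (RatFunc K)
      {w : R | ∃ t : Fin M → ℤ, (∀ p, t p ≠ 0 → i < p ∧ p < j) ∧ (∀ p, 0 ≤ t p) ∧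
        w = orderedMonomial x xinv t})
    (hrdist : ∀ i j : Fin M, i < j → (i ∈ kset ∨ j ∈ kset) → r i j = 0)
    (x₀ : R) (hFA : IsFA (RatFunc K) x₀) :
    ∀ a : R, ∃ (N : ℕ) (e : Fin N → ℤ) (c₀ : RatFunc K), c₀ ≠ 0 ∧
      ∑ i ∈ Finset.range (N + 1),
        (c₀ • ∏ w : Fin N,
          (Polynomial.X - Polynomial.C ((RatFunc.X : RatFunc K) ^ (e w)))).coeff i •
            (x₀ ^ i * a * x₀ ^ (N - i)) = 0 := by
  have hQ : QS (RatFunc.X : RatFunc K) kset x xinv s r :=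
    ⟨RatFunc.X_ne_zero, hinv, hrel, hr, hrdist⟩
  have hm := main_zero hQ
  intro a
  obtain ⟨hx0, hfa⟩ := hFA
  obtain ⟨N, c, hc0, -, hsum⟩ := hfa a
  let p : Polynomial (RatFunc K) :=
    ∑ i ∈ Finset.range (N + 1), Polynomial.monomial i (c (N - i))
  have hcoeff : ∀ i ≤ N, p.coeff i = c (N - i) := by
    intro i hi
    simp only [p, Polynomial.finsetSum_coeff, Polynomial.coeff_monomial]
    rw [Finset.sum_ite_eq' (Finset.range (N + 1)) i (fun i => c (N - i))]
    simp [Nat.lt_succ_of_le hi]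
  have hcN : p.coeff N ≠ 0 := by
    rw [hcoeff N le_rfl]; simpa using hc0
  have hp0 : p ≠ 0 := by
    intro h; rw [h] at hcN; simp at hcN
  have hdeg : p.natDegree = N := by
    apply le_antisymm
    · apply Polynomial.natDegree_sum_le_of_forall_le
      intro i hi
      rw [Finset.mem_range] at hi
      exact (Polynomial.natDegree_monomial_le _).trans (by omega)
    · exact Polynomial.le_natDegree_of_ne_zero hcN
  have hP : ∑ i ∈ Finset.range (N + 1), p.coeff i • (x₀ ^ i * a * x₀ ^ (N - i)) = 0 := by
    rw [← hsum, ← Finset.sum_range_reflect]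
    apply Finset.sum_congr rfl
    intro i hi
    rw [Finset.mem_range] at hi
    have h1 : N + 1 - 1 - i = N - i := by omega
    have h2 : N - (N - i) = i := by omega
    rw [h1, hcoeff _ (by omega), h2]
  obtain ⟨L, e, he⟩ := split_exists (q := (RatFunc.X : RatFunc K)) x₀
    (fun b hb => key_eigen RatFunc.X_ne_zero hm hbasisInd hbasisSpan x₀ b hx0 hb) N p a hp0 hdeg hP
  exact ⟨L, e, 1, one_ne_zero, by simpa only [one_smul] using he⟩
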